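/- Let R = (c_1, …, c_r) be a finite family of rankings of Fin n and let D_1 ≠ D_2 be two different sets of eventual competitors (connected components of the competitivity graph G_c(R)). If a ∈ D_1, b, b' ∈ D_2 and there is a ranking c_m ∈ R with a ≺_{c_m} b, then there is a ranking c_{m'} ∈ R with a ≺_{c_{m'}} b'. -/

import Mathlib

/-- `i` precedes `j` in the ranking `c` (i.e. the position of `i` is smaller). -/
def Prec {n : ℕ} (c : Equiv.Perm (Fin n)) (i j : Fin n) : Prop :=
  c⁻¹ i < c⁻¹ j

/-- Two nodes compete with respect to a family of rankings `c`. -/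
def Compete {n r : ℕ} (c : Fin r → Equiv.Perm (Fin n)) (i j : Fin n) : Prop :=
  ∃ s t : Fin r, Prec (c s) i j ∧ Prec (c t) j i

/-- The competitivity graph of a family of rankings. -/
def competitivityGraph {n r : ℕ} (c : Fin r → Equiv.Perm (Fin n)) :
    SimpleGraph (Fin n) where
  Adj i j := Compete c i j
  symm := by
    refine ⟨?_⟩
    rintro i j ⟨s, t, h1, h2⟩
    exact ⟨t, s, h2, h1⟩
  loopless := by
    refine ⟨?_⟩
    rintro i ⟨s, t, h1, _⟩
    exact lt_irrefl _ h1

/-!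
Two elements that do not compete are ordered the same way by all rankings. So if `a` lies outside
a component `D` and precedes some `x ∈ D` in one ranking, it precedes `x` in all of them. For a
competitor `y` of `x`, a ranking that places `x` before `y` therefore places `a` before `y`, and
the property passes along every path of `D`.
-/

section StrictTotalOrders

variable {ι α : Type*}

/-- The competitivity graph of an arbitrary family `prec` of irreflexive relations: `i` and `j` are
adjacent when two members of the family order them in opposite ways. A ranking enters only through
its precedence relation, so neither the ground set nor the family needs to be finite. -/
def competitionGraph (prec : ι → α → α → Prop) [∀ s, Std.Irrefl (prec s)] : SimpleGraph α where
  Adj i j := ∃ s t, prec s i j ∧ prec t j i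
  symm := ⟨fun _ _ ⟨s, t, hij, hji⟩ => ⟨t, s, hji, hij⟩⟩
  loopless := ⟨fun i ⟨s, _, hii, _⟩ => irrefl_of (prec s) i hii⟩

theorem prec_of_prec_of_not_adj {prec : ι → α → α → Prop} [∀ s, Std.Irrefl (prec s)]
    [∀ s, Std.Trichotomous (prec s)] {m : ι} {a x : α} (hm : prec m a x)
    (hax : ¬ (competitionGraph prec).Adj a x) (s : ι) : prec s a x := by
  rcases trichotomous_of (prec s) a x with h | rfl | h
  · exact h
  · exact absurd hm (irrefl_of (prec m) a)
  · exact absurd ⟨m, s, hm, h⟩ hax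

variable {prec : ι → α → α → Prop} [∀ s, IsStrictTotalOrder α (prec s)]

theorem forall_prec_of_adj {a x y : α} (hax : ∀ s, prec s a x)
    (hxy : (competitionGraph prec).Adj x y) (hay : ¬ (competitionGraph prec).Adj a y) :
    ∀ s, prec s a y := by
  obtain ⟨t, -, hxy, -⟩ := hxy
  exact prec_of_prec_of_not_adj (trans_of (prec t) (hax t) hxy) hay

theorem outlink_spreads_general {D : (competitionGraph prec).ConnectedComponent} {a b b' : α}
    (ha : a ∉ D.supp) (hb : b ∈ D.supp) (hb' : b' ∈ D.supp) {m : ι} (hm : prec m a b) :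
    ∀ s, prec s a b' := by
  have not_adj {x : α} (hx : x ∈ D.supp) : ¬ (competitionGraph prec).Adj a x :=
    fun hax => ha ((D.mem_supp_congr_adj hax).mpr hx)
  obtain ⟨p⟩ := SimpleGraph.ConnectedComponent.exact (hb.trans hb'.symm)
  have hab : ∀ s, prec s a b := prec_of_prec_of_not_adj hm (not_adj hb)
  clear hm
  induction p with
  | nil => exact hab
  | cons hbx _ ih =>
    have hx := D.mem_supp_of_adj_mem_supp hb hbx
    exact ih hx hb' (forall_prec_of_adj hab hbx (not_adj hx))

end StrictTotalOrders

instance Prec.isStrictTotalOrder {n : ℕ} (c : Equiv.Perm (Fin n)) :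
    IsStrictTotalOrder (Fin n) (Prec c) :=
  c⁻¹.injective.isStrictTotalOrder_onFun (r := (· < ·))

/-- If `D_1 ≠ D_2` are two different connected components of the competitivity graph,
`a ∈ D_1`, `b, b' ∈ D_2` and `a` precedes `b` in some ranking, then `a` precedes `b'`
in some ranking. -/
theorem outlink_spreads {n r : ℕ} (c : Fin r → Equiv.Perm (Fin n))
    (D1 D2 : (competitivityGraph c).ConnectedComponent) (hD : D1 ≠ D2)
    (a b b' : Fin n) (ha : a ∈ D1.supp) (hb : b ∈ D2.supp) (hb' : b' ∈ D2.supp)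
    (m : Fin r) (hm : Prec (c m) a b) :
    ∃ m' : Fin r, Prec (c m') a b' := by
  have ha' : a ∉ D2.supp := fun h => hD (SimpleGraph.ConnectedComponent.eq_of_common_vertex ha h)
  exact ⟨m, outlink_spreads_general (prec := fun s => Prec (c s)) ha' hb hb' hm m⟩
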